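/- There exists an absolute constant C > 0 with the following property: for all real numbers a < b and every vector field v : ℝ³ → ℝ³ that is continuously differentiable on a neighborhood of the closed cylinder D̄ × [a,b], satisfies div v = 0 there, satisfies v(x)·(x₁, x₂, 0) = 0 whenever x₁² + x₂² = 1 and x₃ ∈ [a,b], and has vanishing flux ∫_D v₃(x₁, x₂, z) dx₁dx₂ = 0 for every z ∈ [a,b], one has ∫_{D×[a,b]} |v|² dx ≤ C ∫_{D×[a,b]} Σ_{i=1}^{2} Σ_{j=1}^{3} (∂_{x_i} v_j)² dx; that is, the L² norm of v is controlled by the L² norm of its horizontal gradient alone, with a constant independent of the length b − a. -/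

import Mathlib

open MeasureTheory

/-- Partial derivative `∂_{x_i} f` of a scalar function on `ℝ³`. -/
noncomputable def pd (i : Fin 3) (f : (Fin 3 → ℝ) → ℝ) (x : Fin 3 → ℝ) : ℝ :=
  fderiv ℝ f x (Pi.single i 1)

/-- The open unit disk in the plane. -/
def unitDisk : Set (Fin 2 → ℝ) := {xh | xh 0 ^ 2 + xh 1 ^ 2 < 1}

/-- The solid finite cylinder `D × [a,b]` with `D` the open unit disk. -/
def solidCyl (a b : ℝ) : Set (Fin 3 → ℝ) :=
  {x | x 0 ^ 2 + x 1 ^ 2 < 1 ∧ x 2 ∈ Set.Icc a b}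

/-- The closed finite cylinder `D̄ × [a,b]`. -/
def closedCyl (a b : ℝ) : Set (Fin 3 → ℝ) :=
  {x | x 0 ^ 2 + x 1 ^ 2 ≤ 1 ∧ x 2 ∈ Set.Icc a b}


/-- one-dimensional oscillation bound -/
lemma osc1 (g g' : ℝ → ℝ) (c : ℝ) (hc1 : c ≤ 1)
    (hg : ∀ s ∈ Set.Icc (-c) c, HasDerivAt g (g' s) s)
    (hg' : ContinuousOn g' (Set.Icc (-c) c)) (x y : ℝ)
    (hx : x ∈ Set.Icc (-c) c) (hy : y ∈ Set.Icc (-c) c) (hxy : x ≤ y) :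
    ENNReal.ofReal ((g y - g x) ^ 2) ≤
      2 * ∫⁻ s in Set.Ioo (-c) c, ENNReal.ofReal (g' s ^ 2) := by
  have hsub : Set.Icc x y ⊆ Set.Icc (-c) c := Set.Icc_subset_Icc hx.1 hy.2
  have hcont : ContinuousOn g' (Set.uIcc x y) := by
    rw [Set.uIcc_of_le hxy]; exact hg'.mono hsub
  have hint : IntervalIntegrable g' volume x y := hcont.intervalIntegrable
  have hint2 : IntervalIntegrable (fun s => g' s ^ 2) volume x y :=
    (hcont.pow 2).intervalIntegrable
  have ftc : ∫ s in x..y, g' s = g y - g x := by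
    apply intervalIntegral.integral_eq_sub_of_hasDerivAt _ hint
    intro s hs
    rw [Set.uIcc_of_le hxy] at hs
    exact hg s (hsub hs)
  have hcs : (g y - g x) ^ 2 ≤ (y - x) * ∫ s in x..y, g' s ^ 2 := by
    rcases hxy.eq_or_lt with h | h
    · subst h; simp
    have hL : 0 < y - x := by linarith
    set m := (g y - g x) / (y - x) with hm
    have h0 : 0 ≤ ∫ s in x..y, (g' s - m) ^ 2 :=
      intervalIntegral.integral_nonneg hxy (fun s _ => sq_nonneg _)
    have h1 : ∫ s in x..y, (g' s - m) ^ 2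
        = (∫ s in x..y, g' s ^ 2) - 2 * m * (g y - g x) + m ^ 2 * (y - x) := by
      have : ∀ s, (g' s - m) ^ 2 = g' s ^ 2 - 2 * m * g' s + m ^ 2 := fun s => by ring
      simp_rw [this]
      rw [intervalIntegral.integral_add (hint2.sub (hint.const_mul _)) (by simp),
        intervalIntegral.integral_sub hint2 (hint.const_mul _),
        intervalIntegral.integral_const_mul, ftc, intervalIntegral.integral_const]
      simp; ring
    rw [h1] at h0
    have hmL : m * (y - x) = g y - g x := by rw [hm]; field_simp
    have := mul_nonneg hL.le h0
    nlinarith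
  have hle : (g y - g x) ^ 2 ≤ 2 * ∫ s in x..y, g' s ^ 2 := by
    refine hcs.trans (mul_le_mul_of_nonneg_right ?_ ?_)
    · linarith [hx.1, hy.2]
    · exact intervalIntegral.integral_nonneg hxy (fun s _ => sq_nonneg _)
  refine (ENNReal.ofReal_le_ofReal hle).trans ?_
  rw [ENNReal.ofReal_mul (by norm_num), intervalIntegral.integral_of_le hxy,
    ofReal_integral_eq_lintegral_ofReal hint2.1 (Filter.Eventually.of_forall fun s => sq_nonneg _)]
  simp only [ENNReal.ofReal_ofNat]
  gcongr 2 * ?_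
  rw [← setLIntegral_congr (Ioo_ae_eq_Ioc (a := x) (b := y) (μ := volume))]
  exact lintegral_mono_set (Set.Ioo_subset_Ioo hx.1 hy.2)

lemma osc (g g' : ℝ → ℝ) (c : ℝ) (hc1 : c ≤ 1)
    (hg : ∀ s ∈ Set.Icc (-c) c, HasDerivAt g (g' s) s)
    (hg' : ContinuousOn g' (Set.Icc (-c) c)) (x y : ℝ)
    (hx : x ∈ Set.Icc (-c) c) (hy : y ∈ Set.Icc (-c) c) :
    ENNReal.ofReal ((g x - g y) ^ 2) ≤
      2 * ∫⁻ s in Set.Ioo (-c) c, ENNReal.ofReal (g' s ^ 2) := by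
  rcases le_total x y with h | h
  · have := osc1 g g' c hc1 hg hg' x y hx hy h
    rwa [show (g x - g y) ^ 2 = (g y - g x) ^ 2 by ring]
  · exact osc1 g g' c hc1 hg hg' y x hy hx h

def Dop : Set (ℝ × ℝ) := {p | p.1 ^ 2 + p.2 ^ 2 < 1}
def Dcl : Set (ℝ × ℝ) := {p | p.1 ^ 2 + p.2 ^ 2 ≤ 1}

lemma Dop_sub : Dop ⊆ Dcl := fun p hp => le_of_lt (show p.1 ^ 2 + p.2 ^ 2 < 1 from hp)

lemma Dop_meas : MeasurableSet Dop := by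
  apply IsOpen.measurableSet
  exact isOpen_lt (by fun_prop) (by fun_prop)

lemma Dcl_sub : Dcl ⊆ Set.Icc (-1) 1 ×ˢ Set.Icc (-1) 1 := by
  intro p hp
  have hp : p.1 ^ 2 + p.2 ^ 2 ≤ 1 := hp
  refine ⟨⟨?_, ?_⟩, ⟨?_, ?_⟩⟩ <;> nlinarith [sq_nonneg p.1, sq_nonneg p.2]

lemma Dcl_compact : IsCompact Dcl := by
  refine IsCompact.of_isClosed_subset ((isCompact_Icc (a := (-1:ℝ)) (b := 1)).prod
    (isCompact_Icc (a := (-1:ℝ)) (b := 1))) ?_ Dcl_sub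
  exact isClosed_le (by fun_prop) (by fun_prop)

/-- choice of a good line -/
lemma good (h : ℝ → ENNReal) (hm : Measurable h) :
    ∃ t ∈ Set.Ioo (-1/2 : ℝ) (1/2), h t ≤ ∫⁻ s, h s := by
  have hv : volume (Set.Ioo (-1/2 : ℝ) (1/2)) = 1 := by
    rw [Real.volume_Ioo]; norm_num
  obtain ⟨t, ht, hle⟩ := exists_le_setLAverage (μ := volume) (s := Set.Ioo (-1/2 : ℝ) (1/2))
    (f := h) (by rw [hv]; simp) (by rw [hv]; simp) hm.aemeasurable
  refine ⟨t, ht, hle.trans ?_⟩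
  rw [setLAverage_eq, hv, div_one]
  exact setLIntegral_le_lintegral _ _

lemma tri2 (a b c : ℝ) : ENNReal.ofReal ((a - c) ^ 2) ≤
    2 * ENNReal.ofReal ((a - b) ^ 2) + 2 * ENNReal.ofReal ((b - c) ^ 2) := by
  have h2 : (2 : ENNReal) = ENNReal.ofReal 2 := by simp
  rw [h2, ← ENNReal.ofReal_mul (by norm_num), ← ENNReal.ofReal_mul (by norm_num),
    ← ENNReal.ofReal_add (by positivity) (by positivity)]
  apply ENNReal.ofReal_le_ofReal
  nlinarith [sq_nonneg (a - b - (b - c))]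

/-- osc bound along both families of lines -/
def Osc (G : ℝ × ℝ → ENNReal) (F : ℝ × ℝ → ℝ) : Prop :=
  (∀ x y t, (x, t) ∈ Dcl → (y, t) ∈ Dcl →
    ENNReal.ofReal ((F (x, t) - F (y, t)) ^ 2) ≤ 2 * ∫⁻ s, G (s, t)) ∧
  (∀ x y t, (t, x) ∈ Dcl → (t, y) ∈ Dcl →
    ENNReal.ofReal ((F (t, x) - F (t, y)) ^ 2) ≤ 2 * ∫⁻ s, G (t, s))

lemma mk_osc (G : ℝ × ℝ → ENNReal) (F d1 d2 : ℝ × ℝ → ℝ)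
    (hd1 : ContinuousOn d1 Dcl) (hd2 : ContinuousOn d2 Dcl)
    (h1 : ∀ p ∈ Dcl, HasDerivAt (fun s => F (s, p.2)) (d1 p) p.1)
    (h2 : ∀ p ∈ Dcl, HasDerivAt (fun s => F (p.1, s)) (d2 p) p.2)
    (hG1 : ∀ p ∈ Dop, ENNReal.ofReal (d1 p ^ 2) ≤ G p)
    (hG2 : ∀ p ∈ Dop, ENNReal.ofReal (d2 p ^ 2) ≤ G p) : Osc G F := by
  have key : ∀ t x : ℝ, x ^ 2 + t ^ 2 ≤ 1 → 0 ≤ 1 - t ^ 2 := fun t x h => by nlinarith [sq_nonneg x]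
  have memI : ∀ t x : ℝ, x ^ 2 + t ^ 2 ≤ 1 → x ∈ Set.Icc (-√(1 - t ^ 2)) (√(1 - t ^ 2)) := by
    intro t x h
    exact abs_le.1 (Real.abs_le_sqrt (by linarith))
  have memC : ∀ t x : ℝ, 0 ≤ 1 - t ^ 2 → x ∈ Set.Icc (-√(1 - t ^ 2)) (√(1 - t ^ 2)) →
      x ^ 2 + t ^ 2 ≤ 1 := by
    intro t x h hx
    have := sq_le_sq' hx.1 hx.2
    rw [Real.sq_sqrt h] at this; linarith
  have memO : ∀ t x : ℝ, 0 ≤ 1 - t ^ 2 → x ∈ Set.Ioo (-√(1 - t ^ 2)) (√(1 - t ^ 2)) →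
      x ^ 2 + t ^ 2 < 1 := by
    intro t x h hx
    have := sq_lt_sq' hx.1 hx.2
    rw [Real.sq_sqrt h] at this; linarith
  have c1 : ∀ t : ℝ, √(1 - t ^ 2) ≤ 1 := fun t => Real.sqrt_le_one.2 (by nlinarith [sq_nonneg t])
  constructor
  · intro x y t hx hy
    have hx : x ^ 2 + t ^ 2 ≤ 1 := hx
    have hy : y ^ 2 + t ^ 2 ≤ 1 := hy
    have ht := key t x hx
    refine (osc (fun s => F (s, t)) (fun s => d1 (s, t)) _ (c1 t)
      (fun s hs => h1 (s, t) (memC t s ht hs)) ?_ x y (memI t x hx) (memI t y hy)).trans ?_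
    · exact hd1.comp (by fun_prop) (fun s hs => memC t s ht hs)
    · gcongr 2 * ?_
      refine le_trans ?_ (setLIntegral_le_lintegral (Set.Ioo (-√(1 - t ^ 2)) (√(1 - t ^ 2))) _)
      exact setLIntegral_mono' measurableSet_Ioo (fun s hs => hG1 (s, t) (memO t s ht hs))
  · intro x y t hx hy
    have hx : x ^ 2 + t ^ 2 ≤ 1 := by have : t ^ 2 + x ^ 2 ≤ 1 := hx
                                      linarith
    have hy : y ^ 2 + t ^ 2 ≤ 1 := by have : t ^ 2 + y ^ 2 ≤ 1 := hy
                                      linarith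
    have ht := key t x hx
    have mC : ∀ s ∈ Set.Icc (-√(1 - t ^ 2)) (√(1 - t ^ 2)), (t, s) ∈ Dcl := by
      intro s hs
      have := memC t s ht hs
      show t ^ 2 + s ^ 2 ≤ 1
      linarith
    have mO : ∀ s ∈ Set.Ioo (-√(1 - t ^ 2)) (√(1 - t ^ 2)), (t, s) ∈ Dop := by
      intro s hs
      have := memO t s ht hs
      show t ^ 2 + s ^ 2 < 1
      linarith
    refine (osc (fun s => F (t, s)) (fun s => d2 (t, s)) _ (c1 t)
      (fun s hs => h2 (t, s) (mC s hs)) ?_ x y (memI t x hx) (memI t y hy)).trans ?_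
    · exact hd2.comp (by fun_prop) (fun s hs => mC s hs)
    · gcongr 2 * ?_
      refine le_trans ?_ (setLIntegral_le_lintegral (Set.Ioo (-√(1 - t ^ 2)) (√(1 - t ^ 2))) _)
      exact setLIntegral_mono' measurableSet_Ioo (fun s hs => hG2 (t, s) (mO s hs))

lemma vol_D_le : volume Dop ≤ 4 := by
  refine (measure_mono (Dop_sub.trans Dcl_sub)).trans ?_
  rw [Measure.volume_eq_prod, Measure.prod_prod, Real.volume_Icc, 
    ← ENNReal.ofReal_mul (by norm_num)]
  norm_num

def SQ : Set (ℝ × ℝ) := Set.Icc (-1) 1 ×ˢ Set.Icc (-1) 1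

lemma osc_int (G : ℝ × ℝ → ENNReal) (hG : Measurable G) (F : ℝ × ℝ → ℝ) (hO : Osc G F)
    (y : ℝ × ℝ) (hy1 : y.1 ∈ Set.Ioo (-1/2 : ℝ) (1/2)) (hy2 : y.2 ∈ Set.Ioo (-1/2 : ℝ) (1/2))
    (hh1 : ∫⁻ s, G (s, y.2) ≤ ∫⁻ p, G p) (hh2 : ∫⁻ s, G (y.1, s) ≤ ∫⁻ p, G p) :
    ∫⁻ p in Dop, ENNReal.ofReal ((F p - F y) ^ 2) ≤ 48 * ∫⁻ p, G p := by
  set T := ∫⁻ p, G p with hT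
  set a : ℝ → ENNReal := fun t => ∫⁻ s, G (s, t) with ha
  set b : ℝ → ENNReal := fun t => ∫⁻ s, G (t, s) with hb
  have ma : Measurable a := hG.lintegral_prod_left'
  have mb : Measurable b := hG.lintegral_prod_right'
  have Ta : ∫⁻ t, a t = T := by
    rw [hT, Measure.volume_eq_prod, lintegral_prod_symm' _ hG]
  have Tb : ∫⁻ t, b t = T := by
    rw [hT, Measure.volume_eq_prod, lintegral_prod _ hG.aemeasurable]
  have q1 : y.1 ^ 2 < 1 / 4 := by nlinarith [hy1.1, hy1.2]
  have q2 : y.2 ^ 2 < 1 / 4 := by nlinarith [hy2.1, hy2.2]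
  have yc : (y.1, y.2) ∈ Dcl := by show y.1 ^ 2 + y.2 ^ 2 ≤ 1; linarith
  have pt : ∀ p ∈ Dop, ENNReal.ofReal ((F p - F y) ^ 2) ≤ 4 * b p.1 + 4 * a p.2 + 8 * T := by
    intro p hp
    have hpc : (p.1, p.2) ∈ Dcl := Dop_sub hp
    have hp : p.1 ^ 2 + p.2 ^ 2 < 1 := hp
    by_cases hc : p.1 ^ 2 ≤ 1 / 2
    · have hq : (p.1, y.2) ∈ Dcl := by show p.1 ^ 2 + y.2 ^ 2 ≤ 1; linarith
      have e1 := hO.2 p.2 y.2 p.1 hpc hq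
      have e2 := hO.1 p.1 y.1 y.2 hq yc
      calc _ ≤ _ := tri2 (F p) (F (p.1, y.2)) (F y)
        _ ≤ 2 * (2 * b p.1) + 2 * (2 * T) := by
          gcongr
          exact e2.trans (by gcongr)
        _ = 4 * b p.1 + 0 + 4 * T := by ring
        _ ≤ _ := by gcongr <;> first | exact zero_le _ | norm_num
    · have hq : (y.1, p.2) ∈ Dcl := by show y.1 ^ 2 + p.2 ^ 2 ≤ 1; linarith
      have e1 := hO.1 p.1 y.1 p.2 hpc hq
      have e2 := hO.2 p.2 y.2 y.1 hq yc
      calc _ ≤ _ := tri2 (F p) (F (y.1, p.2)) (F y)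
        _ ≤ 2 * (2 * a p.2) + 2 * (2 * T) := by
          gcongr
          exact e2.trans (by gcongr)
        _ = 0 + 4 * a p.2 + 4 * T := by ring
        _ ≤ _ := by gcongr <;> first | exact zero_le _ | norm_num
  have mS : (volume : Measure (ℝ × ℝ)).restrict SQ
      = (volume.restrict (Set.Icc (-1:ℝ) 1)).prod (volume.restrict (Set.Icc (-1:ℝ) 1)) := by
    rw [Measure.volume_eq_prod, SQ, Measure.prod_restrict]
  have vI : volume.restrict (Set.Icc (-1:ℝ) 1) Set.univ = 2 := by
    rw [Measure.restrict_apply_univ, Real.volume_Icc]; norm_num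
  calc _ ≤ ∫⁻ p in Dop, (4 * b p.1 + 4 * a p.2 + 8 * T) := setLIntegral_mono' Dop_meas pt
    _ ≤ ∫⁻ p in SQ, (4 * b p.1 + 4 * a p.2 + 8 * T) :=
      lintegral_mono_set (Dop_sub.trans Dcl_sub)
    _ = 4 * (∫⁻ p in SQ, b p.1)
        + 4 * (∫⁻ p in SQ, a p.2) + 8 * T * 4 := by
      rw [lintegral_add_right _ (by fun_prop), lintegral_add_right _ (by fun_prop),
        lintegral_const_mul _ (by fun_prop), lintegral_const_mul _ (by fun_prop),
        lintegral_const, mS, Measure.prod_apply MeasurableSet.univ]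
      simp only [Measure.restrict_univ, Set.preimage_univ, lintegral_const, vI]
      norm_num
    _ ≤ 4 * (2 * T) + 4 * (2 * T) + 8 * T * 4 := by
      gcongr
      · rw [mS, lintegral_prod _ (by fun_prop)]
        simp only [lintegral_const, vI]
        rw [lintegral_mul_const _ mb, mul_comm, ← Tb]
        gcongr
        exact Measure.restrict_le_self
      · rw [mS, lintegral_prod _ (by fun_prop)]
        simp only [lintegral_const, vI]
        rw [mul_comm, ← Ta]
        gcongr
        exact Measure.restrict_le_self
    _ = 48 * T := by ring

lemma mean_le (F : ℝ × ℝ → ℝ) (hF : ContinuousOn F Dcl) (hm : ∫ p in Dop, F p = 0) (k : ℝ) :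
    ∫⁻ p in Dop, ENNReal.ofReal (F p ^ 2) ≤ ∫⁻ p in Dop, ENNReal.ofReal ((F p - k) ^ 2) := by
  have i1 : IntegrableOn F Dop := (hF.integrableOn_compact Dcl_compact).mono_set Dop_sub
  have i2 : IntegrableOn (fun p => F p ^ 2) Dop :=
    ((hF.pow 2).integrableOn_compact Dcl_compact).mono_set Dop_sub
  have i3 : IntegrableOn (fun p => (F p - k) ^ 2) Dop :=
    (((hF.sub continuousOn_const).pow 2).integrableOn_compact Dcl_compact).mono_set Dop_sub
  rw [← ofReal_integral_eq_lintegral_ofReal i2 (Filter.Eventually.of_forall fun s => sq_nonneg _),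
    ← ofReal_integral_eq_lintegral_ofReal i3 (Filter.Eventually.of_forall fun s => sq_nonneg _)]
  apply ENNReal.ofReal_le_ofReal
  have ik : IntegrableOn (fun p : ℝ × ℝ => k ^ 2) Dop :=
    (continuousOn_const.integrableOn_compact Dcl_compact).mono_set Dop_sub
  have : ∀ p, (F p - k) ^ 2 = F p ^ 2 - 2 * k * F p + k ^ 2 := fun p => by ring
  simp_rw [this]
  have i4 : IntegrableOn (fun p => F p ^ 2 - 2 * k * F p) Dop := i2.sub (i1.const_mul _)
  rw [integral_add i4 ik, integral_sub i2 (i1.const_mul _),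
    integral_const_mul, hm]
  have : 0 ≤ ∫ p in Dop, k ^ 2 := integral_nonneg fun _ => sq_nonneg _
  linarith

lemma split_le (F : ℝ × ℝ → ℝ) (y : ℝ × ℝ) (T : ENNReal)
    (h : ∫⁻ p in Dop, ENNReal.ofReal ((F p - F y) ^ 2) ≤ 48 * T)
    (hy : ENNReal.ofReal (F y ^ 2) ≤ 6 * T) :
    ∫⁻ p in Dop, ENNReal.ofReal (F p ^ 2) ≤ 144 * T := by
  calc _ ≤ ∫⁻ p in Dop, (2 * ENNReal.ofReal ((F p - F y) ^ 2) + 12 * T) := by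
        apply lintegral_mono
        intro p
        have := tri2 (F p) (F y) 0
        simp only [sub_zero] at this
        refine this.trans ?_
        calc _ ≤ 2 * ENNReal.ofReal ((F p - F y) ^ 2) + 2 * (6 * T) := by gcongr
          _ = _ := by ring
    _ ≤ 2 * (48 * T) + 12 * T * 4 := by
        rw [lintegral_add_right _ measurable_const, lintegral_const_mul' _ _ (by norm_num),
          lintegral_const, Measure.restrict_apply_univ]
        gcongr
        exact vol_D_le
    _ = 144 * T := by ring

/-- the pointwise bound from tangency -/
lemma bdry (A B C P Q s c : ℝ) (H : ENNReal) (hc : 0 < c) (hs : s ^ 2 ≤ c ^ 2)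
    (h1 : ENNReal.ofReal ((A - B) ^ 2) ≤ 2 * H) (h2 : ENNReal.ofReal ((A - C) ^ 2) ≤ 2 * H)
    (h3 : ENNReal.ofReal ((P - Q) ^ 2) ≤ 2 * H)
    (e1 : B * c + P * s = 0) (e2 : C * (-c) + Q * s = 0) :
    ENNReal.ofReal (A ^ 2) ≤ 6 * H := by
  have hBC : (B + C) ^ 2 ≤ (P - Q) ^ 2 := by
    have : (B + C) * c = - s * (P - Q) := by linarith
    have h : ((B + C) * c) ^ 2 = s ^ 2 * (P - Q) ^ 2 := by rw [this]; ring
    have h' : (B + C) ^ 2 * c ^ 2 ≤ (P - Q) ^ 2 * c ^ 2 := by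
      nlinarith [mul_le_mul_of_nonneg_right hs (sq_nonneg (P - Q))]
    exact le_of_mul_le_mul_right h' (by positivity)
  have hA : A ^ 2 ≤ (A - B) ^ 2 + (A - C) ^ 2 + (P - Q) ^ 2 := by
    nlinarith [sq_nonneg (A - B - (A - C)), sq_nonneg (A - B - (B + C)),
      sq_nonneg (A - C - (B + C))]
  calc _ ≤ ENNReal.ofReal ((A - B) ^ 2 + (A - C) ^ 2 + (P - Q) ^ 2) :=
        ENNReal.ofReal_le_ofReal hA
    _ = _ := by rw [ENNReal.ofReal_add (by positivity) (by positivity),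
                  ENNReal.ofReal_add (by positivity) (by positivity)]
    _ ≤ 2 * H + 2 * H + 2 * H := by gcongr
    _ = 6 * H := by ring

lemma slice_bound (w d1 d2 : Fin 3 → ℝ × ℝ → ℝ)
    (hw : ∀ j, ContinuousOn (w j) Dcl)
    (hd1 : ∀ j, ContinuousOn (d1 j) Dcl) (hd2 : ∀ j, ContinuousOn (d2 j) Dcl)
    (h1 : ∀ j, ∀ p ∈ Dcl, HasDerivAt (fun s => w j (s, p.2)) (d1 j p) p.1)
    (h2 : ∀ j, ∀ p ∈ Dcl, HasDerivAt (fun s => w j (p.1, s)) (d2 j p) p.2)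
    (hb : ∀ p : ℝ × ℝ, p.1 ^ 2 + p.2 ^ 2 = 1 → w 0 p * p.1 + w 1 p * p.2 = 0)
    (hm : ∫ p in Dop, w 2 p = 0) :
    ∫⁻ p in Dop, ENNReal.ofReal (w 0 p ^ 2 + w 1 p ^ 2 + w 2 p ^ 2) ≤
      336 * ∫⁻ p in Dop, ENNReal.ofReal (d1 0 p ^ 2 + d1 1 p ^ 2 + d1 2 p ^ 2 +
        d2 0 p ^ 2 + d2 1 p ^ 2 + d2 2 p ^ 2) := by
  set g : ℝ × ℝ → ℝ := fun p => d1 0 p ^ 2 + d1 1 p ^ 2 + d1 2 p ^ 2 +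
        d2 0 p ^ 2 + d2 1 p ^ 2 + d2 2 p ^ 2 with hg
  set G : ℝ × ℝ → ENNReal := Dop.indicator (fun p => ENNReal.ofReal (g p)) with hGdef
  have gc : ContinuousOn g Dop := by
    have a1 := fun j => (hd1 j).mono Dop_sub
    have a2 := fun j => (hd2 j).mono Dop_sub
    exact ((((((a1 0).pow 2).add ((a1 1).pow 2)).add ((a1 2).pow 2)).add ((a2 0).pow 2)).add
      ((a2 1).pow 2)).add ((a2 2).pow 2)
  have mG : Measurable G := by
    classical
    rw [hGdef, ← Set.piecewise_eq_indicator]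
    exact (ENNReal.continuous_ofReal.comp_continuousOn gc).measurable_piecewise
      continuousOn_const Dop_meas
  have TG : ∫⁻ p in Dop, ENNReal.ofReal (g p) = ∫⁻ p, G p := (lintegral_indicator Dop_meas _).symm
  rw [TG]
  have hO : ∀ j, Osc G (w j) := by
    intro j
    apply mk_osc G (w j) (d1 j) (d2 j) (hd1 j) (hd2 j) (h1 j) (h2 j)
    · intro p hp
      rw [hGdef, Set.indicator_of_mem hp]
      apply ENNReal.ofReal_le_ofReal
      simp only [hg]
      fin_cases j <;> simp <;> nlinarith [sq_nonneg (d1 0 p), sq_nonneg (d1 1 p), sq_nonneg (d1 2 p),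
        sq_nonneg (d2 0 p), sq_nonneg (d2 1 p), sq_nonneg (d2 2 p)]
    · intro p hp
      rw [hGdef, Set.indicator_of_mem hp]
      apply ENNReal.ofReal_le_ofReal
      simp only [hg]
      fin_cases j <;> simp <;> nlinarith [sq_nonneg (d1 0 p), sq_nonneg (d1 1 p), sq_nonneg (d1 2 p),
        sq_nonneg (d2 0 p), sq_nonneg (d2 1 p), sq_nonneg (d2 2 p)]
  obtain ⟨y2, hy2, hh1⟩ := good (fun t => ∫⁻ s, G (s, t)) mG.lintegral_prod_left'
  obtain ⟨y1, hy1, hh2⟩ := good (fun t => ∫⁻ s, G (t, s)) mG.lintegral_prod_right'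
  have Ta : ∫⁻ t, ∫⁻ s, G (s, t) = ∫⁻ p, G p := by
    rw [Measure.volume_eq_prod, lintegral_prod_symm' _ mG]
  have Tb : ∫⁻ t, ∫⁻ s, G (t, s) = ∫⁻ p, G p := by
    rw [Measure.volume_eq_prod, lintegral_prod _ mG.aemeasurable]
  simp only [Ta] at hh1
  simp only [Tb] at hh2
  set T := ∫⁻ p, G p
  have B := fun j => osc_int G mG (w j) (hO j) (y1, y2) hy1 hy2 hh1 hh2
  have q1 : y1 ^ 2 < 1 / 4 := by nlinarith [hy1.1, hy1.2]
  have q2 : y2 ^ 2 < 1 / 4 := by nlinarith [hy2.1, hy2.2]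
  have yc : (y1, y2) ∈ Dcl := by show y1 ^ 2 + y2 ^ 2 ≤ 1; linarith
  have b0 : ENNReal.ofReal (w 0 (y1, y2) ^ 2) ≤ 6 * T := by
    set c := √(1 - y2 ^ 2)
    have hc2 : c ^ 2 = 1 - y2 ^ 2 := Real.sq_sqrt (by linarith)
    have hc : 0 < c := Real.sqrt_pos.2 (by linarith)
    have cp : c ^ 2 + y2 ^ 2 = 1 := by linarith
    have cn : (-c) ^ 2 + y2 ^ 2 = 1 := by linarith [neg_sq c]
    refine (bdry _ (w 0 (c, y2)) (w 0 (-c, y2)) (w 1 (c, y2)) (w 1 (-c, y2)) y2 c _ hc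
      (by linarith) ((hO 0).1 _ _ _ yc cp.le) ((hO 0).1 _ _ _ yc cn.le)
      ((hO 1).1 _ _ _ cp.le cn.le) (hb (c, y2) cp) (hb (-c, y2) cn)).trans ?_
    gcongr
  have b1 : ENNReal.ofReal (w 1 (y1, y2) ^ 2) ≤ 6 * T := by
    set c := √(1 - y1 ^ 2)
    have hc2 : c ^ 2 = 1 - y1 ^ 2 := Real.sq_sqrt (by linarith)
    have hc : 0 < c := Real.sqrt_pos.2 (by linarith)
    have cp : y1 ^ 2 + c ^ 2 = 1 := by linarith
    have cn : y1 ^ 2 + (-c) ^ 2 = 1 := by linarith [neg_sq c]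
    have e1 := hb (y1, c) cp
    have e2 := hb (y1, -c) cn
    refine (bdry _ (w 1 (y1, c)) (w 1 (y1, -c)) (w 0 (y1, c)) (w 0 (y1, -c)) y1 c _ hc
      (by linarith) ((hO 1).2 _ _ _ yc cp.le) ((hO 1).2 _ _ _ yc cn.le)
      ((hO 0).2 _ _ _ cp.le cn.le) ((add_comm _ _).trans e1) ((add_comm _ _).trans e2)).trans ?_
    gcongr
  have f0 := split_le (w 0) _ T (B 0) b0
  have f1 := split_le (w 1) _ T (B 1) b1
  have f2 := (mean_le (w 2) (hw 2) hm (w 2 (y1, y2))).trans (B 2)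
  have mm : ∀ j, AEMeasurable (fun p => ENNReal.ofReal (w j p ^ 2)) (volume.restrict Dop) := by
    intro j
    exact ((((hw j).mono Dop_sub).pow 2).aemeasurable Dop_meas).ennreal_ofReal
  have eq : ∀ p, ENNReal.ofReal (w 0 p ^ 2 + w 1 p ^ 2 + w 2 p ^ 2) =
      ENNReal.ofReal (w 0 p ^ 2) + ENNReal.ofReal (w 1 p ^ 2) + ENNReal.ofReal (w 2 p ^ 2) := by
    intro p
    rw [ENNReal.ofReal_add (by positivity) (by positivity),
                  ENNReal.ofReal_add (by positivity) (by positivity)]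
  simp_rw [eq]
  rw [lintegral_add_right' _ (mm 2), lintegral_add_right' _ (mm 1)]
  calc _ ≤ 144 * T + 144 * T + 48 * T := by gcongr
    _ = 336 * T := by ring

/-- coordinates -/
lemma mp3 : MeasurePreserving (fun q : ℝ × (ℝ × ℝ) => (![q.2.1, q.2.2, q.1] : Fin 3 → ℝ)) ∧
    MeasurableEmbedding (fun q : ℝ × (ℝ × ℝ) => (![q.2.1, q.2.2, q.1] : Fin 3 → ℝ)) := by
  let e : ℝ × (ℝ × ℝ) ≃ᵐ (Fin 3 → ℝ) :=
    ((MeasurableEquiv.refl ℝ).prodCongr MeasurableEquiv.finTwoArrow.symm).trans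
      (MeasurableEquiv.piFinSuccAbove (fun _ : Fin 3 => ℝ) 2).symm
  have he : (fun q : ℝ × (ℝ × ℝ) => (![q.2.1, q.2.2, q.1] : Fin 3 → ℝ)) = e := by
    funext q
    ext i
    fin_cases i <;> rfl
  have hmp : MeasurePreserving e := by
    refine MeasurePreserving.trans (?_ : MeasurePreserving _ volume volume)
      (volume_preserving_piFinSuccAbove (fun _ : Fin 3 => ℝ) 2).symm
    exact (MeasurePreserving.id volume).prod (volume_preserving_finTwoArrow ℝ).symm
  rw [he]
  exact ⟨hmp, e.measurableEmbedding⟩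

lemma solid_meas (a b : ℝ) : MeasurableSet (solidCyl a b) := by
  have : MeasurableSet {x : Fin 3 → ℝ | x 0 ^ 2 + x 1 ^ 2 < 1} :=
    (isOpen_lt (by fun_prop) (by fun_prop)).measurableSet
  exact this.inter ((measurable_pi_apply 2) measurableSet_Icc)

lemma closed_compact (a b : ℝ) : IsCompact (closedCyl a b) := by
  refine IsCompact.of_isClosed_subset (isCompact_Icc (a := ![-1, -1, a]) (b := ![1, 1, b])) ?_ ?_
  · have h : IsClosed {x : Fin 3 → ℝ | x 0 ^ 2 + x 1 ^ 2 ≤ 1} :=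
      isClosed_le (by fun_prop) (by fun_prop)
    exact h.inter
      (isClosed_Icc.preimage (continuous_apply (2 : Fin 3)))
  · intro x hx
    have h1 : x 0 ^ 2 + x 1 ^ 2 ≤ 1 := hx.1
    have h2 := hx.2
    constructor
    · intro i
      fin_cases i <;> simp
      · nlinarith [sq_nonneg (x 0), sq_nonneg (x 1)]
      · nlinarith [sq_nonneg (x 0), sq_nonneg (x 1)]
      · exact h2.1
    · intro i
      fin_cases i <;> simp
      · nlinarith [sq_nonneg (x 0), sq_nonneg (x 1)]
      · nlinarith [sq_nonneg (x 0), sq_nonneg (x 1)]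
      · exact h2.2

lemma fub (a b : ℝ) (f : (Fin 3 → ℝ) → ℝ) (hf : ContinuousOn f (closedCyl a b)) :
    Measurable (fun z => ∫⁻ p : ℝ × ℝ, (solidCyl a b).indicator
      (fun x => ENNReal.ofReal (f x)) ![p.1, p.2, z]) ∧ 
    ∫⁻ x in solidCyl a b, ENNReal.ofReal (f x) =
      ∫⁻ z, ∫⁻ p : ℝ × ℝ, (solidCyl a b).indicator
        (fun x => ENNReal.ofReal (f x)) ![p.1, p.2, z] := by
  have hsub : solidCyl a b ⊆ closedCyl a b := fun x hx => ⟨hx.1.le, hx.2⟩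
  have mI : Measurable ((solidCyl a b).indicator (fun x => ENNReal.ofReal (f x))) := by
    classical
    rw [← Set.piecewise_eq_indicator]
    exact (ENNReal.continuous_ofReal.comp_continuousOn (hf.mono hsub)).measurable_piecewise
      continuousOn_const (solid_meas a b)
  have mc := mI.comp mp3.2.measurable
  refine ⟨mc.lintegral_prod_right', ?_⟩
  rw [← lintegral_indicator (solid_meas a b), ← mp3.1.lintegral_comp_emb mp3.2,
    Measure.volume_eq_prod]
  exact lintegral_prod _ mc.aemeasurable

lemma inner_eq (a b z : ℝ) (hz : z ∈ Set.Icc a b) (f : (Fin 3 → ℝ) → ℝ) :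
    ∫⁻ p : ℝ × ℝ, (solidCyl a b).indicator (fun x => ENNReal.ofReal (f x)) ![p.1, p.2, z] =
      ∫⁻ p in Dop, ENNReal.ofReal (f ![p.1, p.2, z]) := by
  rw [← lintegral_indicator Dop_meas]
  congr 1
  ext p
  by_cases hp : p ∈ Dop
  · have : ![p.1, p.2, z] ∈ solidCyl a b := ⟨hp, hz⟩
    rw [Set.indicator_of_mem this, Set.indicator_of_mem hp]
  · have : ![p.1, p.2, z] ∉ solidCyl a b := fun h => hp h.1
    rw [Set.indicator_of_notMem this, Set.indicator_of_notMem hp]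

lemma inner_zero (a b z : ℝ) (hz : z ∉ Set.Icc a b) (f : (Fin 3 → ℝ) → ℝ) :
    ∫⁻ p : ℝ × ℝ, (solidCyl a b).indicator (fun x => ENNReal.ofReal (f x)) ![p.1, p.2, z] = 0 := by
  have : ∀ p : ℝ × ℝ, (solidCyl a b).indicator (fun x => ENNReal.ofReal (f x)) ![p.1, p.2, z]
      = 0 := fun p => Set.indicator_of_notMem (fun h => hz h.2) _
  simp [this]

lemma final_bound (a b : ℝ) (v : (Fin 3 → ℝ) → (Fin 3 → ℝ)) (U : Set (Fin 3 → ℝ))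
    (hU : IsOpen U) (hUc : closedCyl a b ⊆ U) (hv : ContDiffOn ℝ 1 v U)
    (ht : ∀ x : Fin 3 → ℝ, x 0 ^ 2 + x 1 ^ 2 = 1 → x 2 ∈ Set.Icc a b →
        v x 0 * x 0 + v x 1 * x 1 = 0)
    (hf : ∀ z ∈ Set.Icc a b, (∫ xh in unitDisk, v ![xh 0, xh 1, z] 2) = 0) :
      (∫ x in solidCyl a b, (v x 0 ^ 2 + v x 1 ^ 2 + v x 2 ^ 2)) ≤
        336 * ∫ x in solidCyl a b,
          ((pd 0 (fun y => v y 0) x) ^ 2 + (pd 0 (fun y => v y 1) x) ^ 2 +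
           (pd 0 (fun y => v y 2) x) ^ 2 + (pd 1 (fun y => v y 0) x) ^ 2 +
           (pd 1 (fun y => v y 1) x) ^ 2 + (pd 1 (fun y => v y 2) x) ^ 2) := by
  have hsub : solidCyl a b ⊆ closedCyl a b := fun x hx => ⟨hx.1.le, hx.2⟩
  have hvj : ∀ j, ContDiffOn ℝ 1 (fun y => v y j) U := fun j => contDiffOn_pi.1 hv j
  have cv : ∀ j, ContinuousOn (fun y => v y j) (closedCyl a b) :=
    fun j => (hvj j).continuousOn.mono hUc
  have cd : ∀ i j, ContinuousOn (pd i (fun y => v y j)) (closedCyl a b) := by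
    intro i j
    have := ((hvj j).continuousOn_fderiv_of_isOpen hU le_rfl).mono hUc
    exact this.clm_apply continuousOn_const
  have dj : ∀ j, ∀ x ∈ closedCyl a b, HasFDerivAt (fun y => v y j) (fderiv ℝ (fun y => v y j) x) x := by
    intro j x hx
    exact (((hvj j).differentiableOn one_ne_zero).differentiableAt
      (hU.mem_nhds (hUc hx))).hasFDerivAt
  set L : (Fin 3 → ℝ) → ℝ := fun x => v x 0 ^ 2 + v x 1 ^ 2 + v x 2 ^ 2 with hL
  set R : (Fin 3 → ℝ) → ℝ := fun x => ((pd 0 (fun y => v y 0) x) ^ 2 + (pd 0 (fun y => v y 1) x) ^ 2 +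
           (pd 0 (fun y => v y 2) x) ^ 2 + (pd 1 (fun y => v y 0) x) ^ 2 +
           (pd 1 (fun y => v y 1) x) ^ 2 + (pd 1 (fun y => v y 2) x) ^ 2) with hR
  have cL : ContinuousOn L (closedCyl a b) :=
    (((cv 0).pow 2).add ((cv 1).pow 2)).add ((cv 2).pow 2)
  have cR : ContinuousOn R (closedCyl a b) :=
    ((((((cd 0 0).pow 2).add ((cd 0 1).pow 2)).add ((cd 0 2).pow 2)).add ((cd 1 0).pow 2)).add
      ((cd 1 1).pow 2)).add ((cd 1 2).pow 2)
  have iL : IntegrableOn L (solidCyl a b) :=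
    (cL.integrableOn_compact (closed_compact a b)).mono_set hsub
  have iR : IntegrableOn R (solidCyl a b) :=
    (cR.integrableOn_compact (closed_compact a b)).mono_set hsub
  have nL : ∀ x, 0 ≤ L x := fun x => by positivity
  have nR : ∀ x, 0 ≤ R x := fun x => by positivity
  have nRi : 0 ≤ ∫ x in solidCyl a b, R x := integral_nonneg nR
  have main : ∫⁻ x in solidCyl a b, ENNReal.ofReal (L x) ≤
      336 * ∫⁻ x in solidCyl a b, ENNReal.ofReal (R x) := by
    rw [(fub a b L cL).2, (fub a b R cR).2, ← lintegral_const_mul _ (fub a b R cR).1]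
    apply lintegral_mono
    intro z
    by_cases hz : z ∈ Set.Icc a b
    swap
    · simp only [inner_zero a b z hz]; exact zero_le
    simp only [inner_eq a b z hz]
    have mc : Set.MapsTo (fun p : ℝ × ℝ => (![p.1, p.2, z] : Fin 3 → ℝ)) Dcl (closedCyl a b) :=
      fun p hp => ⟨hp, hz⟩
    have cc : Continuous (fun p : ℝ × ℝ => (![p.1, p.2, z] : Fin 3 → ℝ)) := by
      apply continuous_pi
      intro i
      fin_cases i
      · exact continuous_fst
      · exact continuous_snd
      · exact continuous_const
    refine slice_bound (fun j p => v ![p.1, p.2, z] j)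
      (fun j p => pd 0 (fun y => v y j) ![p.1, p.2, z])
      (fun j p => pd 1 (fun y => v y j) ![p.1, p.2, z])
      (fun j => (cv j).comp cc.continuousOn mc) (fun j => (cd 0 j).comp cc.continuousOn mc)
      (fun j => (cd 1 j).comp cc.continuousOn mc) ?_ ?_ ?_ ?_
    · intro j p hp
      have hd : HasDerivAt (fun s : ℝ => (![s, p.2, z] : Fin 3 → ℝ)) (Pi.single 0 1) p.1 := by
        rw [hasDerivAt_pi]
        intro i
        fin_cases i
        · exact hasDerivAt_id p.1
        · exact hasDerivAt_const p.1 p.2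
        · exact hasDerivAt_const p.1 z
      exact (dj j _ (mc hp)).comp_hasDerivAt p.1 hd
    · intro j p hp
      have hd : HasDerivAt (fun s : ℝ => (![p.1, s, z] : Fin 3 → ℝ)) (Pi.single 1 1) p.2 := by
        rw [hasDerivAt_pi]
        intro i
        fin_cases i
        · exact hasDerivAt_const p.2 p.1
        · exact hasDerivAt_id p.2
        · exact hasDerivAt_const p.2 z
      exact (dj j _ (mc hp)).comp_hasDerivAt p.2 hd
    · intro p hp
      exact ht ![p.1, p.2, z] hp hz
    · have := (volume_preserving_finTwoArrow ℝ).setIntegral_preimage_emb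
        MeasurableEquiv.finTwoArrow.measurableEmbedding
        (fun p : ℝ × ℝ => v ![p.1, p.2, z] 2) Dop
      rw [← this]
      exact hf z hz
  rw [← ofReal_integral_eq_lintegral_ofReal iL (Filter.Eventually.of_forall nL),
    ← ofReal_integral_eq_lintegral_ofReal iR (Filter.Eventually.of_forall nR),
    show (336 : ENNReal) = ENNReal.ofReal 336 by simp, ← ENNReal.ofReal_mul (by norm_num)] at main
  exact (ENNReal.ofReal_le_ofReal_iff (by positivity)).1 main

/-- Poincaré inequality with horizontal gradient only: there is an absolute constant
`C > 0` such that for every finite cylinder `D × [a,b]` and every divergence-free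
`C¹` vector field `v` tangent to the lateral boundary and with vanishing flux through
each cross-section, `∫ |v|² ≤ C ∫ Σ_{i=1}^{2} Σ_{j=1}^{3} (∂_i v_j)²`, with `C`
independent of the length `b - a`. -/
theorem stmt13 : ∃ C > (0:ℝ), ∀ (a b : ℝ), a < b →
    ∀ (v : (Fin 3 → ℝ) → (Fin 3 → ℝ)) (U : Set (Fin 3 → ℝ)),
      IsOpen U → closedCyl a b ⊆ U → ContDiffOn ℝ 1 v U →
      (∀ x ∈ closedCyl a b, ∑ j : Fin 3, pd j (fun y => v y j) x = 0) →
      (∀ x : Fin 3 → ℝ, x 0 ^ 2 + x 1 ^ 2 = 1 → x 2 ∈ Set.Icc a b →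
        v x 0 * x 0 + v x 1 * x 1 = 0) →
      (∀ z ∈ Set.Icc a b, (∫ xh in unitDisk, v ![xh 0, xh 1, z] 2) = 0) →
      (∫ x in solidCyl a b, (v x 0 ^ 2 + v x 1 ^ 2 + v x 2 ^ 2)) ≤
        C * ∫ x in solidCyl a b,
          ((pd 0 (fun y => v y 0) x) ^ 2 + (pd 0 (fun y => v y 1) x) ^ 2 +
           (pd 0 (fun y => v y 2) x) ^ 2 + (pd 1 (fun y => v y 0) x) ^ 2 +
           (pd 1 (fun y => v y 1) x) ^ 2 + (pd 1 (fun y => v y 2) x) ^ 2) := by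
  refine ⟨336, by norm_num, ?_⟩
  intro a b _ v U hU hUc hv _ ht hf
  exact final_bound a b v U hU hUc hv ht hf
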